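/- arXiv:1003.1950 — 2 statements merged into one kernel-verified Lean document; each statement's English description precedes it below -/
import Mathlib

section
/- For every internal state x ∈ 𝒯 and every state y ∈ 𝒳, the expected number of transitions from x to y on the event A, starting from x, factorizes as E[1_A · N(x,y) | X(0) = x] = v(x) · p(x,y) · γ(y), where γ(y) is taken to be 1 for y ∈ ℱ and 0 for y = 0. -/
open MeasureTheory ENNReal

noncomputable section

/-- The absorption time `T = inf {t > 0 : X t ∈ {0} ∪ F}` of a trajectory `ω`. -/
def absTime {S : Type*} (good : S) (F : Set S) (ω : ℕ → S) : ℕ∞ :=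
  sInf {t : ℕ∞ | ∃ n : ℕ, t = (n : ℕ∞) ∧ 0 < n ∧ (ω n = good ∨ ω n ∈ F)}

/-- The rare event `A = {X T ∈ F}`: the chain is absorbed in the bad set `F`. -/
def hitsF {S : Type*} (good : S) (F : Set S) (ω : ℕ → S) : Prop :=
  ∃ n : ℕ, absTime good F ω = (n : ℕ∞) ∧ ω n ∈ F

open Classical in
/-- `N(x,y)`: the number of transitions `x → y` strictly before the absorption time. -/
def transCount {S : Type*} (good : S) (F : Set S) (x y : S) (ω : ℕ → S) : ℝ≥0∞ :=
  ∑' t : ℕ, if (t : ℕ∞) < absTime good F ω ∧ ω t = x ∧ ω (t + 1) = y then 1 else 0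

open Classical in
/-- The number of visits to `x` up to (and including) the absorption time. -/
def visitCount {S : Type*} (good : S) (F : Set S) (x : S) (ω : ℕ → S) : ℝ≥0∞ :=
  ∑' t : ℕ, if (t : ℕ∞) ≤ absTime good F ω ∧ ω t = x then 1 else 0

open Classical in
/-- `γ̃(y)`: the hitting probability `γ(y)` for internal `y`, with the convention that it is
`1` on the bad set `F` and `0` at the good state. -/
def gammaTilde {S : Type*} [MeasurableSpace S] (good : S) (F : Set S)
    (ℙ : S → Measure (ℕ → S)) (y : S) : ℝ≥0∞ :=
  if y ∈ F then 1 else if y = good then 0 else ℙ y {ω | hitsF good F ω}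

open Filtration Preorder

/-!
On `{t < T, X t = x, X (t + 1) = y}` the trajectory has met only internal states at the times
`1, …, t`, so it is absorbed in `F` exactly when the trajectory restarted at time `t + 1` enters `F`
through internal states, its initial state counting. Under the law started at `y` the latter event
has probability `γ̃(y)`, for internal, bad and good `y` alike. The Markov property at time `t + 1`
and one transition step hence give
`P_z(t < T, X t = x, X (t + 1) = y, A) = P_z(t < T, X t = x) p(x,y) γ̃(y)`, to be summed over `t`.
Since `x` is internal, `t < T` and `t ≤ T` select the same visits to `x`.

For the Markov property, an event of the first `n + 1` coordinates that prescribes the state at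
time `n` is a countable disjoint union of cylinders, so one further step multiplies its probability
by an entry of `p`. Iterating gives all cylinders of the future, and these determine a finite
measure.
-/

section Trajectories

variable {S : Type*} {good : S} {F : Set S} {ω : ℕ → S}

/-- The set `𝒯` of internal states: those that are neither good nor bad. -/
def internalStates (good : S) (F : Set S) : Set S :=
  {s | s ≠ good ∧ s ∉ F}

/-- The trajectory `ω` seen from time `n` on. -/
def shiftPath (n : ℕ) (ω : ℕ → S) : ℕ → S :=
  fun k ↦ ω (n + k)

/-- The trajectory `ω` enters the bad set `F` through internal states only. Unlike in `hitsF`, the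
state at time `0` counts, so that a trajectory starting in `F` reaches `F` at once. -/
def ReachesBadFirst (good : S) (F : Set S) (ω : ℕ → S) : Prop :=
  ∃ n, ω n ∈ F ∧ ∀ i < n, ω i ∈ internalStates good F

theorem lt_absTime_iff {t : ℕ} :
    (t : ℕ∞) < absTime good F ω ↔ ∀ i < t, ω (i + 1) ∈ internalStates good F := by
  rw [← ENat.add_one_le_iff (ENat.natCast_ne_top t), absTime, le_sInf_iff]
  constructor
  · intro hT i hi
    by_contra hω
    have hmem : ω (i + 1) = good ∨ ω (i + 1) ∈ F := by
      simpa only [internalStates, Set.mem_ofPred_eq, not_and_or, not_not] using hω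
    have hle : t + 1 ≤ i + 1 := by exact_mod_cast hT _ ⟨i + 1, rfl, i.succ_pos, hmem⟩
    omega
  · rintro hω _ ⟨n, rfl, hn, hmem⟩
    norm_cast
    by_contra! hnt
    obtain ⟨i, rfl⟩ := Nat.exists_eq_add_one.mpr hn
    have hint := hω i (by omega)
    exact hmem.elim hint.1 hint.2

theorem lt_absTime_iff_le_of_internal {t : ℕ} (ht : ω t ∈ internalStates good F) :
    (t : ℕ∞) < absTime good F ω ↔ (t : ℕ∞) ≤ absTime good F ω := by
  refine ⟨le_of_lt, fun hle ↦ ?_⟩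
  cases t with
  | zero => exact lt_absTime_iff.mpr fun i hi ↦ absurd hi i.not_lt_zero
  | succ s =>
    have hs : (s : ℕ∞) < absTime good F ω := lt_of_lt_of_le (by exact_mod_cast s.lt_succ_self) hle
    refine lt_absTime_iff.mpr fun i hi ↦ ?_
    rcases Nat.lt_succ_iff_lt_or_eq.mp hi with hi | rfl
    exacts [lt_absTime_iff.mp hs i hi, ht]

theorem hitsF_iff_exists_lt_absTime :
    hitsF good F ω ↔ ∃ n : ℕ, (n : ℕ∞) < absTime good F ω ∧ ω (n + 1) ∈ F := by
  constructor
  · rintro ⟨n, hT, hn⟩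
    have hpos : ((0 : ℕ) : ℕ∞) < absTime good F ω :=
      lt_absTime_iff.mpr fun i hi ↦ absurd hi i.not_lt_zero
    obtain ⟨m, rfl⟩ := Nat.exists_eq_add_one.mpr (show 0 < n by simpa [hT] using hpos)
    exact ⟨m, hT ▸ by exact_mod_cast m.lt_succ_self, hn⟩
  · rintro ⟨n, hT, hn⟩
    refine ⟨n + 1, le_antisymm (sInf_le ⟨n + 1, rfl, n.succ_pos, .inr hn⟩) ?_, hn⟩
    exact_mod_cast Order.add_one_le_of_lt hT

theorem hitsF_iff_reachesBadFirst_shiftPath_one :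
    hitsF good F ω ↔ ReachesBadFirst good F (shiftPath 1 ω) := by
  simp only [hitsF_iff_exists_lt_absTime, lt_absTime_iff, ReachesBadFirst, shiftPath,
    Nat.add_comm 1, and_comm]

theorem reachesBadFirst_iff_shiftPath {n : ℕ} (hω : ∀ i < n, ω i ∈ internalStates good F) :
    ReachesBadFirst good F ω ↔ ReachesBadFirst good F (shiftPath n ω) := by
  constructor
  · rintro ⟨m, hm, hlt⟩
    have hnm : n ≤ m := le_of_not_gt fun hmn ↦ (hω m hmn).2 hm
    obtain ⟨k, rfl⟩ := Nat.exists_eq_add_of_le hnm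
    exact ⟨k, hm, fun i hi ↦ hlt (n + i) (by omega)⟩
  · rintro ⟨k, hk, hlt⟩
    refine ⟨n + k, hk, fun i hi ↦ ?_⟩
    rcases lt_or_ge i n with hin | hni
    · exact hω i hin
    · obtain ⟨j, rfl⟩ := Nat.exists_eq_add_of_le hni
      exact hlt j (by omega)

theorem hitsF_iff_reachesBadFirst_shiftPath {t : ℕ} (ht : (t : ℕ∞) < absTime good F ω) :
    hitsF good F ω ↔ ReachesBadFirst good F (shiftPath (t + 1) ω) := by
  have hint : ∀ i < t, shiftPath 1 ω i ∈ internalStates good F := fun i hi ↦ by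
    simpa only [shiftPath, Nat.add_comm 1] using lt_absTime_iff.mp ht i hi
  have hshift : shiftPath t (shiftPath 1 ω) = shiftPath (t + 1) ω := by
    funext k
    simp only [shiftPath, Nat.add_comm t 1, Nat.add_assoc]
  rw [hitsF_iff_reachesBadFirst_shiftPath_one, reachesBadFirst_iff_shiftPath hint, hshift]

theorem reachesBadFirst_iff_hitsF_of_internal (h₀ : ω 0 ∈ internalStates good F) :
    ReachesBadFirst good F ω ↔ hitsF good F ω := by
  rw [hitsF_iff_reachesBadFirst_shiftPath_one, ← reachesBadFirst_iff_shiftPath]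
  simpa using h₀

theorem reachesBadFirst_iff_mem_of_not_internal (h₀ : ω 0 ∉ internalStates good F) :
    ReachesBadFirst good F ω ↔ ω 0 ∈ F := by
  refine ⟨?_, fun h ↦ ⟨0, h, by simp⟩⟩
  rintro ⟨n, hn, hlt⟩
  obtain rfl : n = 0 := Nat.eq_zero_of_not_pos fun hpos ↦ h₀ (hlt 0 hpos)
  exact hn

end Trajectories

section Measurability

variable {S : Type*} [MeasurableSpace S]

theorem measurable_piLE_eval {ι : Type*} [Preorder ι] {X : ι → Type*}
    [∀ i, MeasurableSpace (X i)] {i n : ι} (hin : i ≤ n) :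
    Measurable[piLE n] fun ω : ∀ i, X i ↦ ω i :=
  (measurable_pi_apply (⟨i, hin⟩ : Set.Iic n)).comp (comap_measurable (restrictLe n))

theorem measurable_shiftPath (n : ℕ) : Measurable (shiftPath (S := S) n) :=
  measurable_pi_lambda _ fun k ↦ measurable_pi_apply (n + k)

theorem measurable_piLE_shiftPath (n m : ℕ) :
    Measurable[piLE (n + m), piLE m] (shiftPath (S := S) n) :=
  measurable_comap_iff.mpr <| @measurable_pi_lambda _ _ _ (piLE (n + m)) _ _ fun i ↦
    measurable_piLE_eval (Nat.add_le_add_left i.2 n)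

variable [DiscreteMeasurableSpace S]

theorem measurableSet_piLE_eval_mem {i n : ℕ} (hin : i ≤ n) (B : Set S) :
    MeasurableSet[piLE n] {ω : ℕ → S | ω i ∈ B} :=
  measurable_piLE_eval hin (.of_discrete (s := B))

theorem measurableSet_piLE_eval_eq {i n : ℕ} (hin : i ≤ n) (s : S) :
    MeasurableSet[piLE n] {ω : ℕ → S | ω i = s} :=
  measurableSet_piLE_eval_mem hin {s}

theorem measurableSet_piLE_cylinder (n : ℕ) (f : ℕ → S) :
    MeasurableSet[piLE n] {ω : ℕ → S | ∀ i ≤ n, ω i = f i} := by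
  simp only [Set.ofPred_forall]
  exact .iInter fun i ↦ .iInter fun hi ↦ measurableSet_piLE_eval_eq hi (f i)

theorem measurableSet_piLE_lt_absTime (good : S) (F : Set S) (t : ℕ) :
    MeasurableSet[piLE t] {ω : ℕ → S | (t : ℕ∞) < absTime good F ω} := by
  simp only [lt_absTime_iff, Set.ofPred_forall]
  exact .iInter fun i ↦ .iInter fun hi ↦ measurableSet_piLE_eval_mem hi _

theorem measurableSet_piLE_lt_absTime_and_eq (good : S) (F : Set S) (t : ℕ) (x : S) :
    MeasurableSet[piLE t] {ω : ℕ → S | (t : ℕ∞) < absTime good F ω ∧ ω t = x} :=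
  (measurableSet_piLE_lt_absTime good F t).inter (measurableSet_piLE_eval_eq le_rfl x)

theorem measurableSet_reachesBadFirst (good : S) (F : Set S) :
    MeasurableSet {ω : ℕ → S | ReachesBadFirst good F ω} := by
  have hmem (i : ℕ) (B : Set S) : MeasurableSet {ω : ℕ → S | ω i ∈ B} :=
    piLE.le i _ (measurableSet_piLE_eval_mem le_rfl B)
  simp only [ReachesBadFirst, Set.ofPred_exists, Set.ofPred_and, Set.ofPred_forall]
  exact .iUnion fun n ↦ (hmem n F).inter <| .iInter fun i ↦ .iInter fun _ ↦ hmem i _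

end Measurability

section Cylinders

theorem cylinder_succ {S : Type*} (n : ℕ) (f : ℕ → S) :
    {ω : ℕ → S | ∀ i ≤ n + 1, ω i = f i} =
      {ω | ∀ i ≤ n, ω i = f i} ∩ {ω | ω (n + 1) = f (n + 1)} := by
  ext ω
  simp only [Nat.le_succ_iff_eq_or_le, forall_eq_or_imp, Set.mem_inter_iff, Set.mem_ofPred_eq,
    and_comm]

variable {S : Type*} [Countable S] [MeasurableSpace S] [DiscreteMeasurableSpace S]
  {μ ν : Measure (ℕ → S)}

theorem measure_eq_of_cylinder_eq {n : ℕ} {E : Set (ℕ → S)} (hE : MeasurableSet[piLE n] E)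
    (h : ∀ f ∈ E, μ {ω | ∀ i ≤ n, ω i = f i} = ν {ω | ∀ i ≤ n, ω i = f i}) : μ E = ν E := by
  obtain ⟨B, -, rfl⟩ := hE
  have hfiber (b : Set.Iic n → S) : MeasurableSet (restrictLe (π := fun _ : ℕ ↦ S) n ⁻¹' {b}) :=
    measurable_restrictLe n (measurableSet_singleton b)
  rw [← tsum_measure_preimage_singleton B.to_countable fun b _ ↦ hfiber b,
    ← tsum_measure_preimage_singleton B.to_countable fun b _ ↦ hfiber b]
  refine tsum_congr fun ⟨b, hb⟩ ↦ ?_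
  let f : ℕ → S := fun i ↦ b ⟨min i n, min_le_right i n⟩
  have hf : restrictLe n f = b := by
    funext i
    exact congrArg b (Subtype.ext (min_eq_left i.2))
  have hcyl : restrictLe (π := fun _ : ℕ ↦ S) n ⁻¹' {b} = {ω | ∀ i ≤ n, ω i = f i} := by
    ext ω
    simp only [← hf, Set.mem_preimage, Set.mem_singleton_iff, funext_iff, Subtype.forall,
      Set.mem_Iic, restrictLe_apply, Set.mem_ofPred_eq]
  rw [hcyl]
  exact h f (by rwa [Set.mem_preimage, hf])

theorem measure_ext_of_cylinder [IsFiniteMeasure ν]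
    (h : ∀ (n : ℕ) (f : ℕ → S), μ {ω | ∀ i ≤ n, ω i = f i} = ν {ω | ∀ i ≤ n, ω i = f i}) :
    μ = ν := by
  refine IsProjectiveLimit.unique (P := fun I : Finset ℕ ↦ ν.map I.restrict) (fun I ↦ ?_)
    fun _ ↦ rfl
  refine Measure.ext fun s hs ↦ ?_
  have hrestrict : Measurable[piLE (I.sup id)] (I.restrict (π := fun _ : ℕ ↦ S)) :=
    @measurable_pi_lambda _ _ _ (piLE (I.sup id)) _ _ fun i ↦
      measurable_piLE_eval (Finset.le_sup (f := id) i.2)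
  rw [Measure.map_apply I.measurable_restrict hs, Measure.map_apply I.measurable_restrict hs]
  exact measure_eq_of_cylinder_eq (hrestrict hs) fun f _ ↦ h _ f

end Cylinders

/-- `ℙ z` is the law, started at `z`, of the Markov chain with transition matrix `p`, as
specified by the probabilities of cylinders. -/
def IsMarkovLaw {S : Type*} [DecidableEq S] [MeasurableSpace S] (p : S → S → ℝ≥0∞)
    (ℙ : S → Measure (ℕ → S)) : Prop :=
  ∀ z (n : ℕ) (f : ℕ → S), ℙ z {ω | ∀ i ≤ n, ω i = f i} =
    (if f 0 = z then 1 else 0) * ∏ i ∈ Finset.range n, p (f i) (f (i + 1))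

namespace IsMarkovLaw

variable {S : Type*} [DecidableEq S] [MeasurableSpace S] {p : S → S → ℝ≥0∞}
  {ℙ : S → Measure (ℕ → S)}

theorem measure_cylinder_succ (hℙ : IsMarkovLaw p ℙ) (z : S) (n : ℕ) (f : ℕ → S) :
    ℙ z {ω | ∀ i ≤ n + 1, ω i = f i} = ℙ z {ω | ∀ i ≤ n, ω i = f i} * p (f n) (f (n + 1)) := by
  rw [hℙ, hℙ, Finset.prod_range_succ, mul_assoc]

variable [Countable S] [DiscreteMeasurableSpace S]

theorem map_eval_zero (hℙ : IsMarkovLaw p ℙ) (z : S) :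
    (ℙ z).map (fun ω ↦ ω 0) = Measure.dirac z := by
  refine Measure.ext_of_singleton fun s ↦ ?_
  rw [Measure.map_apply (measurable_pi_apply 0) (measurableSet_singleton s)]
  simpa [Pi.single_apply, Set.indicator_apply, eq_comm, Set.preimage] using hℙ z 0 fun _ ↦ s

theorem isProbabilityMeasure (hℙ : IsMarkovLaw p ℙ) (z : S) : IsProbabilityMeasure (ℙ z) := by
  have : IsProbabilityMeasure ((ℙ z).map fun ω ↦ ω 0) := hℙ.map_eval_zero z ▸ inferInstance
  exact Measure.isProbabilityMeasure_of_map fun ω : ℕ → S ↦ ω 0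

theorem ae_eval_zero (hℙ : IsMarkovLaw p ℙ) (z : S) : ∀ᵐ ω ∂ℙ z, ω 0 = z := by
  have h : ∀ᵐ s ∂(ℙ z).map (fun ω ↦ ω 0), s = z := by
    rw [hℙ.map_eval_zero, ae_dirac_eq]
    rfl
  exact ae_of_ae_map (measurable_pi_apply 0).aemeasurable h

theorem measure_inter_eval_succ (hℙ : IsMarkovLaw p ℙ) {n : ℕ} {E : Set (ℕ → S)}
    (hE : MeasurableSet[piLE n] E) {w : S} (hw : ∀ ω ∈ E, ω n = w) (z y : S) :
    ℙ z (E ∩ {ω | ω (n + 1) = y}) = ℙ z E * p w y := by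
  have hy : MeasurableSet {ω : ℕ → S | ω (n + 1) = y} :=
    piLE.le (n + 1) _ (measurableSet_piLE_eval_eq le_rfl y)
  suffices (ℙ z).restrict {ω | ω (n + 1) = y} E = (p w y • ℙ z) E by
    rwa [Measure.restrict_apply' hy, Measure.smul_apply, smul_eq_mul, mul_comm] at this
  refine measure_eq_of_cylinder_eq hE fun f hf ↦ ?_
  let f' : ℕ → S := Function.update f (n + 1) y
  have hf' : ∀ i ≤ n, f' i = f i := fun i hi ↦ Function.update_of_ne (by omega) _ _
  have hcyl : {ω : ℕ → S | ∀ i ≤ n, ω i = f i} = {ω | ∀ i ≤ n, ω i = f' i} := by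
    ext ω
    exact forall₂_congr fun i hi ↦ by rw [hf' i hi]
  have hf'y : f' (n + 1) = y := Function.update_self _ _ _
  calc (ℙ z).restrict {ω | ω (n + 1) = y} {ω | ∀ i ≤ n, ω i = f i}
      = ℙ z {ω | ∀ i ≤ n + 1, ω i = f' i} := by
        rw [Measure.restrict_apply' hy, cylinder_succ, hcyl, hf'y]
    _ = ℙ z {ω | ∀ i ≤ n, ω i = f i} * p w y := by
        rw [hℙ.measure_cylinder_succ, ← hcyl, hf'y, hf' n le_rfl, hw f hf]
    _ = (p w y • ℙ z) {ω | ∀ i ≤ n, ω i = f i} := mul_comm _ _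

theorem measure_inter_shiftPath_cylinder (hℙ : IsMarkovLaw p ℙ) {n : ℕ} {E : Set (ℕ → S)}
    (hE : MeasurableSet[piLE n] E) {w : S} (hw : ∀ ω ∈ E, ω n = w) (z : S) (m : ℕ) (g : ℕ → S) :
    ℙ z (E ∩ shiftPath n ⁻¹' {ω | ∀ i ≤ m, ω i = g i}) =
      ℙ z E * ℙ w {ω | ∀ i ≤ m, ω i = g i} := by
  induction m with
  | zero =>
    have hset : E ∩ shiftPath n ⁻¹' {ω | ∀ i ≤ 0, ω i = g i} = if g 0 = w then E else ∅ := by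
      ext ω
      split_ifs with hg <;> simp +contextual [shiftPath, hw, hg, eq_comm (a := w)]
    rw [hset, hℙ]
    split_ifs <;> simp
  | succ m ih =>
    have hset : E ∩ shiftPath n ⁻¹' {ω | ∀ i ≤ m + 1, ω i = g i} =
        E ∩ shiftPath n ⁻¹' {ω | ∀ i ≤ m, ω i = g i} ∩ {ω | ω (n + m + 1) = g (m + 1)} := by
      rw [cylinder_succ, Set.preimage_inter, Set.inter_assoc]
      rfl
    have hmeas := (piLE.mono (n.le_add_right m) _ hE).inter
      (measurable_piLE_shiftPath n m (measurableSet_piLE_cylinder m g))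
    rw [hset, hℙ.measure_inter_eval_succ hmeas fun ω hω ↦ hω.2 m le_rfl, ih,
      hℙ.measure_cylinder_succ, mul_assoc]

theorem measure_inter_shiftPath_preimage (hℙ : IsMarkovLaw p ℙ) {n : ℕ} {E : Set (ℕ → S)}
    (hE : MeasurableSet[piLE n] E) {w : S} (hw : ∀ ω ∈ E, ω n = w) (z : S) {C : Set (ℕ → S)}
    (hC : MeasurableSet C) :
    ℙ z (E ∩ shiftPath n ⁻¹' C) = ℙ z E * ℙ w C := by
  have := hℙ.isProbabilityMeasure
  have : IsFiniteMeasure (ℙ z E • ℙ w) := Measure.smul_finite _ (measure_ne_top _ _)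
  have hshift := measurable_shiftPath (S := S) n
  have hmap {D : Set (ℕ → S)} (hD : MeasurableSet D) :
      ((ℙ z).restrict E).map (shiftPath n) D = ℙ z (E ∩ shiftPath n ⁻¹' D) := by
    rw [Measure.map_apply hshift hD, Measure.restrict_apply (hshift hD), Set.inter_comm]
  have hlaw : ((ℙ z).restrict E).map (shiftPath n) = ℙ z E • ℙ w :=
    measure_ext_of_cylinder fun m g ↦ by
      rw [hmap (piLE.le m _ (measurableSet_piLE_cylinder m g)),
        hℙ.measure_inter_shiftPath_cylinder hE hw]
      rfl
  rw [← hmap hC, hlaw, Measure.smul_apply, smul_eq_mul]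

theorem gammaTilde_eq_measure_reachesBadFirst (hℙ : IsMarkovLaw p ℙ) (good : S) (F : Set S)
    (y : S) :
    gammaTilde good F ℙ y = ℙ y {ω | ReachesBadFirst good F ω} := by
  have := hℙ.isProbabilityMeasure y
  by_cases hy : y ∈ internalStates good F
  · have hae : {ω | ReachesBadFirst good F ω} =ᵐ[ℙ y] {ω | hitsF good F ω} := by
      filter_upwards [hℙ.ae_eval_zero y] with ω h₀
      exact propext (reachesBadFirst_iff_hitsF_of_internal (h₀ ▸ hy))
    rw [gammaTilde, if_neg hy.2, if_neg hy.1, measure_congr hae]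
  · have hae : {ω | ReachesBadFirst good F ω} =ᵐ[ℙ y] {_ω | y ∈ F} := by
      filter_upwards [hℙ.ae_eval_zero y] with ω h₀
      exact propext <| h₀ ▸ reachesBadFirst_iff_mem_of_not_internal (h₀ ▸ hy)
    rw [gammaTilde, measure_congr hae]
    by_cases hyF : y ∈ F
    · simp [hyF]
    · have hgood : y = good := by_contra fun hne ↦ hy ⟨hne, hyF⟩
      simp [hgood ▸ hyF, hgood]

theorem measure_transition_inter_hitsF (hℙ : IsMarkovLaw p ℙ) (good : S) (F : Set S) (x y z : S)
    (t : ℕ) :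
    ℙ z ({ω | (t : ℕ∞) < absTime good F ω ∧ ω t = x ∧ ω (t + 1) = y} ∩ {ω | hitsF good F ω}) =
      ℙ z {ω | (t : ℕ∞) < absTime good F ω ∧ ω t = x} * (p x y * gammaTilde good F ℙ y) := by
  let V : Set (ℕ → S) := {ω | (t : ℕ∞) < absTime good F ω ∧ ω t = x}
  have hV : MeasurableSet[piLE t] V := measurableSet_piLE_lt_absTime_and_eq good F t x
  have hVy : MeasurableSet[piLE (t + 1)] (V ∩ {ω | ω (t + 1) = y}) :=
    (piLE.mono t.le_succ _ hV).inter (measurableSet_piLE_eval_eq le_rfl y)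
  have hset : {ω | (t : ℕ∞) < absTime good F ω ∧ ω t = x ∧ ω (t + 1) = y} ∩ {ω | hitsF good F ω} =
      V ∩ {ω | ω (t + 1) = y} ∩ shiftPath (t + 1) ⁻¹' {ω | ReachesBadFirst good F ω} := by
    ext ω
    simp only [V, Set.mem_inter_iff, Set.mem_ofPred_eq, Set.mem_preimage, ← and_assoc]
    exact and_congr_right fun h ↦ hitsF_iff_reachesBadFirst_shiftPath h.1.1
  rw [hset, hℙ.measure_inter_shiftPath_preimage hVy (fun ω hω ↦ hω.2) z
      (measurableSet_reachesBadFirst good F),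
    hℙ.measure_inter_eval_succ hV (fun ω hω ↦ hω.2),
    hℙ.gammaTilde_eq_measure_reachesBadFirst, mul_assoc]

end IsMarkovLaw

section Counting

theorem lintegral_tsum_ite_one {α ι : Type*} [Countable ι] [MeasurableSpace α] (μ : Measure α)
    (P : ι → α → Prop) [∀ i, DecidablePred (P i)] (hP : ∀ i, MeasurableSet {a | P i a}) :
    ∫⁻ a, ∑' i, (if P i a then 1 else 0) ∂μ = ∑' i, μ {a | P i a} := by
  rw [lintegral_tsum fun i ↦ (Measurable.ite (hP i) measurable_const measurable_const).aemeasurable]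
  refine tsum_congr fun i ↦ ?_
  rw [← lintegral_indicator_one (hP i)]
  simp only [Set.indicator_apply, Set.mem_ofPred_eq, Pi.one_apply]

variable {S : Type*} [MeasurableSpace S] [DiscreteMeasurableSpace S] {good : S} {F : Set S}

theorem lintegral_visitCount {x : S} (hx : x ∈ internalStates good F) (μ : Measure (ℕ → S)) :
    ∫⁻ ω, visitCount good F x ω ∂μ =
      ∑' t : ℕ, μ {ω | (t : ℕ∞) < absTime good F ω ∧ ω t = x} := by
  have hlt (t : ℕ) (ω : ℕ → S) : (t : ℕ∞) ≤ absTime good F ω ∧ ω t = x ↔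
      (t : ℕ∞) < absTime good F ω ∧ ω t = x :=
    and_congr_left fun ht ↦ (lt_absTime_iff_le_of_internal (ht ▸ hx)).symm
  classical
  simp only [visitCount, hlt]
  exact lintegral_tsum_ite_one μ _ fun t ↦
    piLE.le t _ (measurableSet_piLE_lt_absTime_and_eq good F t x)

theorem measurableSet_transition (good : S) (F : Set S) (x y : S) (t : ℕ) :
    MeasurableSet {ω : ℕ → S | (t : ℕ∞) < absTime good F ω ∧ ω t = x ∧ ω (t + 1) = y} := by
  simp only [← and_assoc]
  exact (piLE.le t _ (measurableSet_piLE_lt_absTime_and_eq good F t x)).inter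
    (piLE.le (t + 1) _ (measurableSet_piLE_eval_eq le_rfl y))

theorem setLIntegral_transCount (good : S) (F : Set S) (x y : S) (μ : Measure (ℕ → S))
    (A : Set (ℕ → S)) :
    ∫⁻ ω in A, transCount good F x y ω ∂μ =
      ∑' t : ℕ, μ ({ω | (t : ℕ∞) < absTime good F ω ∧ ω t = x ∧ ω (t + 1) = y} ∩ A) := by
  classical
  simp only [transCount]
  rw [lintegral_tsum_ite_one _ _ fun t ↦ measurableSet_transition good F x y t]
  exact tsum_congr fun t ↦ Measure.restrict_apply (measurableSet_transition good F x y t)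

end Counting

theorem expectation_indicator_transCount_eq_general {S : Type*} [Countable S] [DecidableEq S]
    [MeasurableSpace S] [DiscreteMeasurableSpace S] {good : S} {F : Set S} {p : S → S → ℝ≥0∞}
    {ℙ : S → Measure (ℕ → S)} (hℙ : IsMarkovLaw p ℙ) {x : S} (hx : x ∈ internalStates good F)
    (y z : S) :
    ∫⁻ ω in {ω | hitsF good F ω}, transCount good F x y ω ∂(ℙ z) =
      (∫⁻ ω, visitCount good F x ω ∂(ℙ z)) * p x y * gammaTilde good F ℙ y := by
  rw [setLIntegral_transCount, lintegral_visitCount hx, mul_assoc, ← ENNReal.tsum_mul_right]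
  exact tsum_congr (hℙ.measure_transition_inter_hitsF good F x y z)

/-- **Proposition 1**: for every internal state `x` and every state `y`,
`E[1_A ⬝ N(x,y) | X 0 = x] = v(x) ⬝ p(x,y) ⬝ γ̃(y)`. -/
theorem expectation_indicator_transCount_eq
    {S : Type*} [Fintype S] [DecidableEq S] [MeasurableSpace S] [DiscreteMeasurableSpace S]
    (good : S) (F : Set S) (hgF : good ∉ F)
    (p : S → S → ℝ≥0∞) (hrow : ∀ x, ∑ y, p x y = 1)
    (hpgg : p good good = 0) (hpgF : ∀ y ∈ F, p good y = 0)
    (ℙ : S → Measure (ℕ → S)) (hprob : ∀ x, IsProbabilityMeasure (ℙ x))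
    -- `ℙ x` is the law of the Markov chain with transition matrix `p` started at `x`
    (hcyl : ∀ x (n : ℕ) (f : ℕ → S),
      ℙ x {ω | ∀ i ≤ n, ω i = f i} =
        (if f 0 = x then 1 else 0) * ∏ i ∈ Finset.range n, p (f i) (f (i + 1)))
    -- from every state the chain is absorbed in `{good} ∪ F` in finite time a.s.
    (habs : ∀ z, ℙ z {ω | absTime good F ω ≠ ⊤} = 1)
    (x : S) (hx : x ≠ good ∧ x ∉ F) (y : S) :
    ∫⁻ ω in {ω | hitsF good F ω}, transCount good F x y ω ∂(ℙ x) =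
      (∫⁻ ω, visitCount good F x ω ∂(ℙ x)) * p x y * gammaTilde good F ℙ y :=
  expectation_indicator_transCount_eq_general hcyl hx y x
end
end

section
/- For each n, let (Ωₙ, 𝒜ₙ) be a measurable space with probability measures Pₙ and Qₙ and an event Aₙ ∈ 𝒜ₙ such that pₙ := Pₙ(Aₙ) ∈ (0,1), pₙ → 0 as n → ∞, and the restriction of Pₙ to Aₙ is absolutely continuous with respect to Qₙ. Let Pₙ^opt = Pₙ(·|Aₙ), let Dₙ = ∫ log(dPₙ^opt/dQₙ) dPₙ^opt be the Kullback–Leibler divergence of Pₙ^opt from Qₙ, and let Mₙ = ∫ (d(Pₙ restricted to Aₙ)/dQₙ)² dQₙ be the second moment of the importance sampling estimator. Suppose there are finite positive constants K₁, K₂ with K₁ ≤ Dₙ ≤ K₂ for all n, and suppose limsup_{n→∞} [log ∫ (dPₙ^opt/dQₙ) dPₙ^opt] / Dₙ < ∞. Then lim_{n→∞} (log Mₙ)/(log pₙ) = 2, i.e., the estimator is asymptotically optimal. -/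
open MeasureTheory ENNReal Filter

/-!
With `Iₙ = ∫ (dPₙ^opt/dQₙ) dPₙ^opt` one has the identity `Mₙ = pₙ² Iₙ`, while `pₙ² ≤ Mₙ` by the
Cauchy–Schwarz inequality. Hence `2 log pₙ ≤ log Mₙ = 2 log pₙ + log Iₙ`, and the estimator is
asymptotically optimal as soon as `log Iₙ` is bounded above by a quantity negligible with respect
to `log pₙ`. A multiple of a bounded divergence `Dₙ` is such a quantity because `log pₙ → -∞`.
-/

open ProbabilityTheory Asymptotics

section SecondMoment

variable {Ω : Type*} [MeasurableSpace Ω] {μ ν : Measure Ω}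

lemma sq_lintegral_le_lintegral_sq_mul {f : Ω → ℝ≥0∞} (hf : AEMeasurable f ν) :
    (∫⁻ ω, f ω ∂ν) ^ 2 ≤ (∫⁻ ω, f ω ^ 2 ∂ν) * ν Set.univ := by
  have holder : ∫⁻ ω, f ω ∂ν ≤ (∫⁻ ω, f ω ^ 2 ∂ν) ^ (1 / 2 : ℝ) * ν Set.univ ^ (1 / 2 : ℝ) := by
    simpa using ENNReal.lintegral_mul_le_Lp_mul_Lq ν Real.HolderConjugate.two_two hf
      (aemeasurable_const (b := (1 : ℝ≥0∞)))
  have sq_rpow_half (x : ℝ≥0∞) : (x ^ (1 / 2 : ℝ)) ^ 2 = x := by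
    simp [← ENNReal.rpow_mul_natCast]
  calc (∫⁻ ω, f ω ∂ν) ^ 2
      ≤ ((∫⁻ ω, f ω ^ 2 ∂ν) ^ (1 / 2 : ℝ) * ν Set.univ ^ (1 / 2 : ℝ)) ^ 2 := by gcongr
    _ = (∫⁻ ω, f ω ^ 2 ∂ν) * ν Set.univ := by rw [mul_pow, sq_rpow_half, sq_rpow_half]

lemma sq_measure_univ_le_lintegral_rnDeriv_sq_mul [μ.HaveLebesgueDecomposition ν] (hμν : μ ≪ ν) :
    μ Set.univ ^ 2 ≤ (∫⁻ ω, μ.rnDeriv ν ω ^ 2 ∂ν) * ν Set.univ := by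
  simpa only [Measure.lintegral_rnDeriv hμν] using
    sq_lintegral_le_lintegral_sq_mul (ν := ν) (Measure.measurable_rnDeriv μ ν).aemeasurable

lemma lintegral_rnDeriv_smul [SigmaFinite μ] [SigmaFinite ν] (hμν : μ ≪ ν) {c : ℝ≥0∞}
    (hc : c ≠ ⊤) :
    ∫⁻ ω, (c • μ).rnDeriv ν ω ∂(c • μ) = c ^ 2 * ∫⁻ ω, μ.rnDeriv ν ω ^ 2 ∂ν :=
  calc ∫⁻ ω, (c • μ).rnDeriv ν ω ∂(c • μ)
      = c * ∫⁻ ω, (c • μ).rnDeriv ν ω ∂μ := by rw [lintegral_smul_measure, smul_eq_mul]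
    _ = c * ∫⁻ ω, c * μ.rnDeriv ν ω ∂μ := by
      congr 1
      exact lintegral_congr_ae (hμν.ae_le (Measure.rnDeriv_smul_left_of_ne_top' μ ν hc))
    _ = c * (c * ∫⁻ ω, μ.rnDeriv ν ω ∂μ) := by
      rw [lintegral_const_mul _ (Measure.measurable_rnDeriv μ ν)]
    _ = c ^ 2 * ∫⁻ ω, μ.rnDeriv ν ω ^ 2 ∂ν := by
      rw [← lintegral_rnDeriv_mul hμν (Measure.measurable_rnDeriv μ ν).aemeasurable, ← mul_assoc,
        ← sq]
      simp only [sq]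

lemma lintegral_rnDeriv_cond [IsFiniteMeasure μ] [SigmaFinite ν] {A : Set Ω}
    (hμA : μ A ≠ 0) (hac : μ.restrict A ≪ ν) :
    ∫⁻ ω, μ[|A].rnDeriv ν ω ∂μ[|A] =
      (μ A)⁻¹ ^ 2 * ∫⁻ ω, (μ.restrict A).rnDeriv ν ω ^ 2 ∂ν :=
  lintegral_rnDeriv_smul hac (ENNReal.inv_ne_top.2 hμA)

end SecondMoment

lemma log_toReal_mem_Icc {p M : ℝ≥0∞} {k : ℕ} {b : ℝ} (hp0 : p ≠ 0) (hp_top : p ≠ ⊤)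
    (hpM : p ^ k ≤ M) (hb : ENNReal.log (p⁻¹ ^ k * M) ≤ b) :
    Real.log M.toReal ∈ Set.Icc (k * Real.log p.toReal) (k * Real.log p.toReal + b) := by
  have hpk : p⁻¹ ^ k ≠ 0 := pow_ne_zero _ (ENNReal.inv_ne_zero.2 hp_top)
  have hM0 : M ≠ 0 := ((ENNReal.pow_pos hp0.bot_lt k).trans_le hpM).ne'
  have hpM_top : p⁻¹ ^ k * M ≠ ⊤ := fun h ↦ by simp [h] at hb
  have hM_top : M ≠ ⊤ := fun h ↦ hpM_top (by rw [h, ENNReal.mul_top hpk])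
  have hp_pos : 0 < p.toReal := ENNReal.toReal_pos hp0 hp_top
  have hM_pos : 0 < M.toReal := ENNReal.toReal_pos hM0 hM_top
  constructor
  · rw [← Real.log_pow]
    exact Real.log_le_log (pow_pos hp_pos k)
      (by simpa only [ENNReal.toReal_pow] using ENNReal.toReal_mono hM_top hpM)
  · rw [ENNReal.log_pos_real (mul_ne_zero hpk hM0) hpM_top, EReal.coe_le_coe_iff,
      ENNReal.toReal_mul, ENNReal.toReal_pow, ENNReal.toReal_inv,
      Real.log_mul (by positivity) hM_pos.ne', Real.log_pow, Real.log_inv] at hb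
    linarith

section Limits

variable {ι : Type*} {l : Filter ι}

lemma tendsto_div_of_mem_Icc_add {x y b : ι → ℝ} {k : ℝ} (hx : ∀ᶠ i in l, x i ≠ 0)
    (hy : ∀ᶠ i in l, y i ∈ Set.Icc (k * x i) (k * x i + b i)) (hb : b =o[l] x) :
    Tendsto (fun i ↦ y i / x i) l (nhds k) := by
  have hsub : (fun i ↦ y i - k * x i) =O[l] b := by
    refine .of_bound' ?_
    filter_upwards [hy] with i hi
    exact abs_le_abs_of_nonneg (sub_nonneg.2 hi.1) (sub_le_iff_le_add'.2 hi.2)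
  have hlim : Tendsto (fun i ↦ k + (y i - k * x i) / x i) l (nhds k) := by
    simpa only [add_zero] using (hsub.trans_isLittleO hb).tendsto_div_nhds_zero.const_add k
  refine hlim.congr' ?_
  filter_upwards [hx] with i hi
  field_simp
  ring

lemma tendsto_log_toReal_atBot {p : ι → ℝ≥0∞} (hp0 : ∀ᶠ i in l, p i ≠ 0)
    (hp : Tendsto p l (nhds 0)) : Tendsto (fun i ↦ Real.log (p i).toReal) l atBot := by
  have hp_real : Tendsto (fun i ↦ (p i).toReal) l (nhds 0) :=
    (ENNReal.tendsto_toReal ENNReal.zero_ne_top).comp hp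
  refine Real.tendsto_log_nhdsNE_zero.comp (tendsto_nhdsWithin_iff.2 ⟨hp_real, ?_⟩)
  filter_upwards [hp0, hp.eventually_ne ENNReal.zero_ne_top] with i hi0 hi_top
  exact ENNReal.toReal_ne_zero.2 ⟨hi0, hi_top⟩

lemma isLittleO_log_toReal_of_isBigO_one {p : ι → ℝ≥0∞} {f : ι → ℝ}
    (hf : f =O[l] fun _ ↦ (1 : ℝ)) (hp0 : ∀ᶠ i in l, p i ≠ 0) (hp : Tendsto p l (nhds 0)) :
    f =o[l] fun i ↦ Real.log (p i).toReal :=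
  hf.trans_isLittleO <| (isLittleO_one_left_iff ℝ).2 <|
    tendsto_abs_atBot_atTop.comp (tendsto_log_toReal_atBot hp0 hp)

end Limits

theorem crossEntropy_asymptotically_optimal_general
    {ι : Type*} {l : Filter ι} {Ω : ι → Type*} [∀ i, MeasurableSpace (Ω i)]
    (P Q : ∀ i, Measure (Ω i))
    [∀ i, IsFiniteMeasure (P i)] [∀ i, IsProbabilityMeasure (Q i)]
    (A : ∀ i, Set (Ω i)) (hp0 : ∀ i, P i (A i) ≠ 0)
    (hto0 : Tendsto (fun i ↦ P i (A i)) l (nhds 0))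
    (hac : ∀ i, (P i).restrict (A i) ≪ Q i)
    {b : ι → ℝ} (hb : b =o[l] fun i ↦ Real.log (P i (A i)).toReal)
    (hlog : ∀ᶠ i in l,
      ENNReal.log (∫⁻ ω, (P i)[|A i].rnDeriv (Q i) ω ∂(P i)[|A i]) ≤ (b i : EReal)) :
    Tendsto (fun i ↦ Real.log (∫⁻ ω, ((P i).restrict (A i)).rnDeriv (Q i) ω ^ 2 ∂(Q i)).toReal /
      Real.log (P i (A i)).toReal) l (nhds 2) := by
  have hlog_ne : ∀ᶠ i in l, Real.log (P i (A i)).toReal ≠ 0 :=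
    (tendsto_log_toReal_atBot (.of_forall hp0) hto0).eventually_ne_atBot 0
  refine tendsto_div_of_mem_Icc_add hlog_ne ?_ hb
  filter_upwards [hlog] with i hi
  have sq_le_secondMoment :
      P i (A i) ^ 2 ≤ ∫⁻ ω, ((P i).restrict (A i)).rnDeriv (Q i) ω ^ 2 ∂(Q i) := by
    simpa only [Measure.restrict_apply_univ, measure_univ, mul_one] using
      sq_measure_univ_le_lintegral_rnDeriv_sq_mul (hac i)
  rw [lintegral_rnDeriv_cond (hp0 i) (hac i)] at hi
  exact_mod_cast log_toReal_mem_Icc (hp0 i) (measure_ne_top _ _) sq_le_secondMoment hi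

/-- The Theorem of the paper: if the Kullback–Leibler divergence `Dₙ` of the zero-variance
measure `Pₙ^opt = Pₙ(·|Aₙ)` from the sampling measure `Qₙ` stays between two finite positive
constants (Condition 1), and the ratio `log ∫ (dPₙ^opt/dQₙ) dPₙ^opt / Dₙ` has finite limsup,
then the importance sampling estimator is asymptotically optimal:
`log E_{Qₙ}[Yₙ²] / log Pₙ(Aₙ) → 2`. -/
theorem crossEntropy_asymptotically_optimal
    {Ω : ℕ → Type*} [∀ n, MeasurableSpace (Ω n)]
    (P Q : ∀ n, Measure (Ω n))
    [∀ n, IsProbabilityMeasure (P n)] [∀ n, IsProbabilityMeasure (Q n)]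
    (A : ∀ n, Set (Ω n)) (hA : ∀ n, MeasurableSet (A n))
    -- `pₙ = Pₙ(Aₙ) ∈ (0,1)` and `pₙ → 0`
    (hp0 : ∀ n, 0 < P n (A n)) (hp1 : ∀ n, P n (A n) < 1)
    (hto0 : Tendsto (fun n => P n (A n)) atTop (nhds 0))
    -- the restriction of `Pₙ` to `Aₙ` is absolutely continuous w.r.t. `Qₙ`
    (hac : ∀ n, (P n).restrict (A n) ≪ Q n)
    -- `Dₙ`: the Kullback–Leibler divergence of `Pₙ^opt = Pₙ(Aₙ)⁻¹ • Pₙ|_{Aₙ}` from `Qₙ`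
    (D : ℕ → ℝ)
    (hD : ∀ n, D n =
      ∫ ω, Real.log (((((P n (A n))⁻¹ • (P n).restrict (A n)).rnDeriv (Q n)) ω).toReal)
        ∂((P n (A n))⁻¹ • (P n).restrict (A n)))
    -- `Mₙ`: the second moment of the importance sampling estimator under `Qₙ`
    (M : ℕ → ℝ≥0∞)
    (hM : ∀ n, M n = ∫⁻ ω, (((P n).restrict (A n)).rnDeriv (Q n) ω) ^ 2 ∂(Q n))
    -- Condition 1: `K₁ ≤ Dₙ ≤ K₂` for finite positive constants
    (K₁ K₂ : ℝ) (hK₁ : 0 < K₁) (hK₂ : 0 < K₂)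
    (hDbound : ∀ n, K₁ ≤ D n ∧ D n ≤ K₂)
    -- `Iₙ = ∫ (dPₙ^opt/dQₙ) dPₙ^opt`
    (I : ℕ → ℝ≥0∞)
    (hI : ∀ n, I n =
      ∫⁻ ω, (((P n (A n))⁻¹ • (P n).restrict (A n)).rnDeriv (Q n) ω)
        ∂((P n (A n))⁻¹ • (P n).restrict (A n)))
    -- `limsupₙ (log Iₙ)/Dₙ < ∞`
    (hlimsup : ∃ C : ℝ, ∀ᶠ n in atTop, ENNReal.log (I n) ≤ ((C * D n : ℝ) : EReal)) :
    Tendsto (fun n => Real.log ((M n).toReal) / Real.log ((P n (A n)).toReal))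
      atTop (nhds 2) := by
  obtain ⟨C, hC⟩ := hlimsup
  have hD_bdd : D =O[atTop] fun _ ↦ (1 : ℝ) :=
    .of_bound K₂ <| .of_forall fun n ↦ by
      simpa [abs_of_pos (hK₁.trans_le (hDbound n).1)] using (hDbound n).2
  have hCD : (fun n ↦ C * D n) =o[atTop] fun n ↦ Real.log (P n (A n)).toReal :=
    isLittleO_log_toReal_of_isBigO_one (hD_bdd.const_mul_left C)
      (.of_forall fun n ↦ (hp0 n).ne') hto0
  simp only [hI] at hC
  simpa only [hM] using
    crossEntropy_asymptotically_optimal_general P Q A (fun n ↦ (hp0 n).ne') hto0 hac hCD hC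
end
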